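/- Assume (G1w), (G2w) and (a1)–(a3) hold. Then the weighted step-k false discovery proportions converge to the limiting false discovery proportion: Q_k → Q as k → ∞. -/

import Mathlib

open Filter Set MeasureTheory
open scoped Classical

/-!
After normalization by its value at `1`, the empirical cumulated p-value function converges
uniformly to a continuous limit `g`. The threshold, the last point where `g` is above the line
`r / α`, then depends continuously on `g`: beyond it, `g` is below the line with a uniform gap on
compact sets, while by (a2) `g` is strictly above the line at points arbitrarily close to it.
If the limiting threshold is positive, the false discovery proportions are quotients of uniformly
convergent functions evaluated at convergent thresholds, with a positive limiting denominator.
If it is zero, (a3) rules out discoveries on all fine enough grids.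
-/

open scoped Topology ENNReal

/-- The Benjamini–Hochberg threshold at level `α` of a cumulated p-value function `g`: the last
`r` in `[0, 1]` at which `g` is not below the line of slope `1 / α`. It is `0` if there is no such
point, by the convention `sSup ∅ = 0`. -/
noncomputable def bhThreshold (α : ℝ) (g : ℝ → ℝ) : ℝ :=
  sSup {r ∈ Icc (0 : ℝ) 1 | r / α ≤ g r}

section Threshold

variable {α : ℝ} {g : ℝ → ℝ} {r : ℝ}

lemma bddAbove_setOf_div_le (α : ℝ) (g : ℝ → ℝ) :
    BddAbove {r ∈ Icc (0 : ℝ) 1 | r / α ≤ g r} :=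
  ⟨1, fun _ hr ↦ hr.1.2⟩

lemma bhThreshold_mem_Icc (α : ℝ) (g : ℝ → ℝ) : bhThreshold α g ∈ Icc (0 : ℝ) 1 :=
  ⟨Real.sSup_nonneg fun _ hr ↦ hr.1.1, Real.sSup_le (fun _ hr ↦ hr.1.2) zero_le_one⟩

lemma le_bhThreshold (hr : r ∈ Icc (0 : ℝ) 1) (h : r / α ≤ g r) : r ≤ bhThreshold α g :=
  le_csSup (bddAbove_setOf_div_le α g) ⟨hr, h⟩

lemma lt_div_of_bhThreshold_lt (hr : r ∈ Icc (0 : ℝ) 1) (h : bhThreshold α g < r) :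
    g r < r / α :=
  lt_of_not_ge fun hle ↦ (le_bhThreshold hr hle).not_gt h

lemma bhThreshold_le_of_forall_le_one (hα : 0 < α) (hg : ∀ r ∈ Icc (0 : ℝ) 1, g r ≤ 1) :
    bhThreshold α g ≤ α :=
  Real.sSup_le (fun r hr ↦ (div_le_one hα).1 (hr.2.trans (hg r hr.1))) hα.le

lemma bhThreshold_div_le (hg : ContinuousOn g (Icc 0 1)) (h0 : 0 ≤ g 0) :
    bhThreshold α g / α ≤ g (bhThreshold α g) := by
  have hclosed : IsClosed {r ∈ Icc (0 : ℝ) 1 | r / α ≤ g r} :=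
    isClosed_Icc.isClosed_le (by fun_prop) hg
  exact (hclosed.csSup_mem ⟨0, by simp, by simpa using h0⟩ (bddAbove_setOf_div_le α g)).2

end Threshold

section UniformConvergence

variable {ι β : Type*} [TopologicalSpace β] {l : Filter ι} {K : Set β}
  {G : ι → β → ℝ} {g h : β → ℝ}

lemma eventually_forall_lt_of_tendstoUniformlyOn (hK : IsCompact K)
    (hG : TendstoUniformlyOn G g l K) (hg : ContinuousOn g K) (hh : ContinuousOn h K)
    (hlt : ∀ x ∈ K, g x < h x) : ∀ᶠ k in l, ∀ x ∈ K, G k x < h x := by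
  obtain ⟨δ, hδ, hgap⟩ := hK.exists_forall_le' (hh.sub hg) fun x hx ↦ sub_pos.2 (hlt x hx)
  filter_upwards [Metric.tendstoUniformlyOn_iff.1 hG δ hδ] with k hk x hx
  have hclose := (abs_lt.1 (hk x hx)).1
  have hgapx : δ ≤ h x - g x := hgap x hx
  linarith

lemma tendstoUniformlyOn_div_apply (hK : IsCompact K) (hG : TendstoUniformlyOn G g l K)
    (hg : ContinuousOn g K) {x : β} (hx : x ∈ K) (hgx : g x ≠ 0) :
    TendstoUniformlyOn (fun k y ↦ G k y / G k x) (fun y ↦ g y / g x) l K := by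
  have hden : TendstoUniformlyOn (fun k (_ : β) ↦ G k x) (fun _ ↦ g x) l K :=
    (hG.tendsto_at hx).tendstoUniformlyOn_const K
  rw [← tendstoLocallyUniformlyOn_iff_tendstoUniformlyOn_of_compact hK]
  exact hG.tendstoLocallyUniformlyOn.div₀ hden.tendstoLocallyUniformlyOn hg continuousOn_const
    fun _ _ ↦ hgx

end UniformConvergence

section ThresholdConvergence

variable {ι : Type*} {l : Filter ι} {α x : ℝ} {G : ι → ℝ → ℝ} {g : ℝ → ℝ}

lemma eventually_bhThreshold_lt (hG : TendstoUniformlyOn G g l (Icc 0 1))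
    (hg : ContinuousOn g (Icc 0 1)) (hx : bhThreshold α g < x) :
    ∀ᶠ k in l, bhThreshold α (G k) < x := by
  obtain ⟨y, hy, hyx⟩ := exists_between hx
  have hy0 : 0 ≤ y := (bhThreshold_mem_Icc α g).1.trans hy.le
  have hsub : Icc y 1 ⊆ Icc 0 1 := Icc_subset_Icc_left hy0
  have hbelow : ∀ᶠ k in l, ∀ r ∈ Icc y 1, G k r < r / α :=
    eventually_forall_lt_of_tendstoUniformlyOn isCompact_Icc (hG.mono hsub) (hg.mono hsub)
      (by fun_prop) fun r hr ↦ lt_div_of_bhThreshold_lt (hsub hr) (hy.trans_le hr.1)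
  filter_upwards [hbelow] with k hk
  refine (Real.sSup_le (fun r hr ↦ ?_) hy0).trans_lt hyx
  exact le_of_not_gt fun hyr ↦ (hk r ⟨hyr.le, hr.1.2⟩).not_ge hr.2

lemma eventually_lt_bhThreshold (hG : ∀ r ∈ Icc (0 : ℝ) 1, Tendsto (G · r) l (𝓝 (g r)))
    (hcross : ∃ᶠ r in 𝓝[Icc 0 1] bhThreshold α g, r / α < g r) (hx : x < bhThreshold α g) :
    ∀ᶠ k in l, x < bhThreshold α (G k) := by
  obtain ⟨r, hr, hr01, hxr⟩ := (hcross.and_eventually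
    (eventually_mem_nhdsWithin.and (mem_nhdsWithin_of_mem_nhds (lt_mem_nhds hx)))).exists
  filter_upwards [(hG r hr01).eventually_const_lt hr] with k hk
  exact hxr.trans_le (le_bhThreshold hr01 hk.le)

lemma tendsto_bhThreshold (hG : TendstoUniformlyOn G g l (Icc 0 1))
    (hg : ContinuousOn g (Icc 0 1))
    (hcross : 0 < bhThreshold α g → ∃ᶠ r in 𝓝[Icc 0 1] bhThreshold α g, r / α < g r) :
    Tendsto (fun k ↦ bhThreshold α (G k)) l (𝓝 (bhThreshold α g)) := by
  refine tendsto_order.2 ⟨fun x hx ↦ ?_, fun x hx ↦ eventually_bhThreshold_lt hG hg hx⟩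
  rcases (bhThreshold_mem_Icc α g).1.eq_or_lt with hzero | hpos
  · exact .of_forall fun k ↦ (hx.trans_eq hzero.symm).trans_le (bhThreshold_mem_Icc α (G k)).1
  · exact eventually_lt_bhThreshold (fun _ ↦ hG.tendsto_at) (hcross hpos) hx

end ThresholdConvergence

section FalseDiscoveryProportion

/-- The false discovery proportion when the false discoveries have total weight `v` and all
discoveries have total weight `w`, with value `0` when nothing is discovered. -/
noncomputable def fdp (v w : ℝ) : ℝ :=
  if 0 < w then v / w else 0

lemma fdp_toReal {w : ℝ≥0∞} (hw : w ≠ ∞) (v : ℝ) :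
    fdp v w.toReal = if 0 < w then v / w.toReal else 0 := by
  simp only [fdp, ENNReal.toReal_pos_iff, hw.lt_top, and_true]

lemma tendsto_fdp {ι : Type*} {l : Filter ι} {v w c : ι → ℝ} {v₀ w₀ : ℝ} (hc : ∀ k, 0 ≤ c k)
    (hv : Tendsto (fun k ↦ v k / c k) l (𝓝 v₀)) (hw : Tendsto (fun k ↦ w k / c k) l (𝓝 w₀))
    (hw₀ : 0 < w₀) : Tendsto (fun k ↦ fdp (v k) (w k)) l (𝓝 (fdp v₀ w₀)) := by
  rw [fdp, if_pos hw₀]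
  refine (hv.div hw hw₀.ne').congr' ?_
  filter_upwards [hw.eventually_const_lt hw₀] with k hk
  have hck : 0 < c k := (hc k).lt_of_ne fun h ↦ by simp [← h] at hk
  rw [fdp, if_pos ((div_pos_iff_of_pos_right hck).1 hk)]
  exact div_div_div_cancel_right₀ hck.ne' _ _

lemma tendstoUniformlyOn_sum_filter_le_div_sum {X ι : Type*} {l : Filter ι} {S : ι → Finset X}
    {p f : X → ℝ} {a : ℝ → ℝ} (hp_one : ∀ k, ∀ s ∈ S k, p s ≤ 1)
    (hG : TendstoUniformlyOn (fun k r ↦ (∑ s ∈ S k with p s ≤ r, f s) / (S k).card)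
      a l (Icc 0 1)) (ha : ContinuousOn a (Icc 0 1)) (ha_one : a 1 ≠ 0) :
    TendstoUniformlyOn (fun k r ↦ (∑ s ∈ S k with p s ≤ r, f s) / ∑ s ∈ S k, f s)
      (fun r ↦ a r / a 1) l (Icc 0 1) := by
  refine (tendstoUniformlyOn_div_apply isCompact_Icc hG ha (right_mem_Icc.2 zero_le_one)
    ha_one).congr (.of_forall fun k r _ ↦ ?_)
  simp only [Finset.filter_true_of_mem (hp_one k)]
  rcases (S k).eq_empty_or_nonempty with hempty | hne
  · simp [hempty]
  · exact div_div_div_cancel_right₀ (Nat.cast_ne_zero.2 hne.card_ne_zero) _ _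

end FalseDiscoveryProportion

section Measure

variable {X : Type*} [MeasurableSpace X] {μ : Measure X} {s : Set X}

lemma withDensity_restrict_self_ne_zero {w : X → ℝ≥0∞} (hw : Measurable w) (hs : μ s ≠ 0)
    (hpos : ∀ x ∈ s, w x ≠ 0) : (μ.restrict s).withDensity w s ≠ 0 := by
  have hsupp : {x | w x ≠ 0} ∩ s = s := inter_eq_right.2 hpos
  rwa [Ne, withDensity_apply_eq_zero hw, hsupp, Measure.restrict_apply_self]

lemma withDensity_restrict_ne_top {w : X → ℝ≥0∞} {C : ℝ≥0∞} (hC : C ≠ ∞) (hs : μ s ≠ ∞)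
    (hle : ∀ x ∈ s, w x ≤ C) (t : Set X) : (μ.restrict s).withDensity w t ≠ ∞ := by
  have hint : ∫⁻ x in s, w x ∂μ ≤ C * μ s :=
    (setLIntegral_mono measurable_const hle).trans_eq (setLIntegral_const s C)
  have := isFiniteMeasure_withDensity (hint.trans_lt (ENNReal.mul_lt_top hC.lt_top hs.lt_top)).ne
  exact measure_ne_top _ t

variable {β : Type*} [LinearOrder β] [TopologicalSpace β] [OrderClosedTopology β]
  [FirstCountableTopology β] [MeasurableSpace β] [OpensMeasurableSpace β] {r : β}

lemma continuousAt_measureReal_Iic {m : Measure β} [IsFiniteMeasure m] (hr : m {r} = 0) :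
    ContinuousAt (fun r ↦ m.real (Iic r)) r := by
  refine (ENNReal.tendsto_toReal (measure_ne_top _ _)).comp <|
    tendsto_measure_of_ae_tendsto_indicator_of_isFiniteMeasure _ measurableSet_Iic
      (fun _ ↦ measurableSet_Iic) ?_
  filter_upwards [measure_eq_zero_iff_ae_notMem.1 hr] with x hx
  rcases lt_or_gt_of_ne hx with hlt | hgt
  · filter_upwards [Ioi_mem_nhds hlt] with y hy
    exact iff_of_true (le_of_lt hy) hlt.le
  · filter_upwards [Iio_mem_nhds hgt] with y hy
    exact iff_of_false (not_le_of_gt hy) hgt.not_ge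

lemma continuousAt_measureReal_inter_setOf_le {p : X → β} (hp : Measurable p) (hs : μ s ≠ ∞)
    (hr : μ {x ∈ s | p x = r} = 0) :
    ContinuousAt (fun r ↦ μ.real (s ∩ {x | p x ≤ r})) r := by
  have : Fact (μ s < ∞) := ⟨hs.lt_top⟩
  have hatom : (μ.restrict s).map p {r} = 0 := by
    rw [Measure.map_apply hp (measurableSet_singleton r),
      Measure.restrict_apply (hp (measurableSet_singleton r)), inter_comm]
    exact hr
  refine (continuousAt_measureReal_Iic hatom).congr (.of_forall fun y ↦ ?_)
  calc
    ((μ.restrict s).map p).real (Iic y) = μ.real (p ⁻¹' Iic y ∩ s) := by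
      rw [map_measureReal_apply hp measurableSet_Iic,
        measureReal_restrict_apply (hp measurableSet_Iic)]
    _ = μ.real (s ∩ {x | p x ≤ y}) := by rw [inter_comm]; rfl

lemma continuousOn_measureReal_inter_setOf_le {p : X → β} (hp : Measurable p) {t : Set X}
    (hst : s ⊆ t) (ht : μ t ≠ ∞) {R : Set β} (hR : ∀ r ∈ R, μ {x ∈ t | p x = r} = 0) :
    ContinuousOn (fun r ↦ μ.real (s ∩ {x | p x ≤ r})) R := fun r hr ↦ by
  have hnull : μ {x ∈ s | p x = r} = 0 :=
    measure_mono_null (inter_subset_inter_left _ hst) (hR r hr)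
  exact (continuousAt_measureReal_inter_setOf_le hp (measure_ne_top_of_subset hst ht)
    hnull).continuousWithinAt

end Measure

lemma sInf_image_le_of_pos {X : Type*} {p : X → ℝ} {T : Set X} (h : 0 < sInf (p '' T)) {t : X}
    (ht : t ∈ T) : sInf (p '' T) ≤ p t := by
  refine csInf_le ?_ (mem_image_of_mem p ht)
  by_contra hunbounded
  exact h.ne' (Real.sInf_of_not_bddBelow hunbounded)

lemma tendsto_fdp_of_lt_pvalue {X ι : Type*} [MeasurableSpace X] {l : Filter ι} {ν : Measure X}
    {T : Set X} {p f : X → ℝ} {S : ι → Finset X} {b v : ι → ℝ} {c m v₀ : ℝ}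
    (hS : ∀ k, ↑(S k) ⊆ T) (hb : Tendsto b l (𝓝 c)) (hcm : c < m) (hpm : ∀ t ∈ T, m ≤ p t) :
    Tendsto (fun k ↦ fdp (v k) (∑ t ∈ S k with p t ≤ b k, f t)) l
      (𝓝 (fdp v₀ (ν.real {t ∈ T | p t ≤ c}))) := by
  have hlimit : {t ∈ T | p t ≤ c} = ∅ :=
    eq_empty_of_forall_notMem fun t ht ↦ (hcm.trans_le (hpm t ht.1)).not_ge ht.2
  rw [hlimit, measureReal_empty, fdp, if_neg (lt_irrefl 0)]
  refine tendsto_const_nhds.congr' ?_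
  filter_upwards [hb.eventually_lt_const hcm] with k hk
  have hgrid : {t ∈ S k | p t ≤ b k} = ∅ :=
    Finset.filter_eq_empty_iff.2 fun t ht ↦ (hk.trans_le (hpm t (hS k ht))).not_ge
  rw [hgrid, Finset.sum_empty, fdp, if_neg (lt_irrefl 0)]

theorem fBH_weighted_fdp_tendsto_general {X ι : Type*} [MeasurableSpace X] {l : Filter ι}
    {ν : Measure X} {T U : Set X} {p f : X → ℝ} {α αStar : ℝ} {a : ℝ → ℝ} {S : ι → Finset X}
    {b : ι → ℝ} (hνT : ν T ≠ 0) (hνT_top : ν T ≠ ∞) (hp : Measurable p)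
    (hp_one : ∀ t ∈ T, p t ≤ 1) (hUT : U ⊆ T) (hα : 0 < α)
    (ha : ∀ r, a r = ν.real {s ∈ T | p s ≤ r})
    (hαStar : αStar = bhThreshold α fun r ↦ a r / ν.real T) (hS : ∀ k, ↑(S k) ⊆ T)
    (hb : ∀ k, b k = bhThreshold α fun r ↦
      (∑ s ∈ S k with p s ≤ r, f s) / ∑ s ∈ S k, f s)
    (hG1 : TendstoUniformlyOn (fun k r ↦ (∑ s ∈ S k with p s ≤ r, f s) / (S k).card)
      a l (Icc 0 1))
    (hG2 : TendstoUniformlyOn (fun k r ↦ (∑ s ∈ S k with s ∈ U ∧ p s ≤ r, f s) / (S k).card)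
      (fun r ↦ ν.real (U ∩ {s | p s ≤ r})) l (Icc 0 1))
    (ha1 : ∀ r ∈ Icc (0 : ℝ) 1, ν {s ∈ T | p s = r} = 0)
    (ha2 : αStar ∈ Ioc 0 α → ∃ᶠ r in 𝓝[Icc 0 1] αStar, r / α < a r / ν.real T)
    (ha3 : αStar = 0 → 0 < sInf (p '' T)) :
    Tendsto (fun k ↦ fdp (∑ t ∈ S k with t ∈ U ∧ p t ≤ b k, f t)
        (∑ t ∈ S k with p t ≤ b k, f t)) l
      (𝓝 (fdp (ν.real (U ∩ {t | p t ≤ αStar})) (ν.real {t ∈ T | p t ≤ αStar}))) := by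
  have hT_pos : 0 < ν.real T := ENNReal.toReal_pos hνT hνT_top
  have ha_cont : ContinuousOn a (Icc 0 1) := by
    rw [funext ha]
    exact continuousOn_measureReal_inter_setOf_le hp Subset.rfl hνT_top ha1
  have hU_cont := continuousOn_measureReal_inter_setOf_le hp hUT hνT_top ha1
  have ha_one : a 1 = ν.real T := by rw [ha, sep_eq_self_iff_mem_true.2 hp_one]
  have hg_cont : ContinuousOn (fun r ↦ a r / ν.real T) (Icc 0 1) := ha_cont.div_const _
  have hg_le_one (r : ℝ) : a r / ν.real T ≤ 1 := by
    rw [div_le_one hT_pos, ha]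
    exact measureReal_mono (sep_subset T _) hνT_top
  have hαStar_mem : αStar ∈ Icc (0 : ℝ) 1 := hαStar ▸ bhThreshold_mem_Icc α _
  have hαStar_le : αStar ≤ α := hαStar ▸ bhThreshold_le_of_forall_le_one hα fun r _ ↦ hg_le_one r
  have hb_tendsto : Tendsto b l (𝓝 αStar) := by
    have hak := tendstoUniformlyOn_sum_filter_le_div_sum
      (fun k s hs ↦ hp_one s (hS k hs)) hG1 ha_cont (ha_one ▸ hT_pos.ne')
    rw [ha_one] at hak
    rw [funext hb, hαStar]
    exact tendsto_bhThreshold hak hg_cont fun hpos ↦ hαStar ▸ ha2 ⟨hαStar ▸ hpos, hαStar_le⟩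
  rcases hαStar_mem.1.eq_or_lt with hzero | hpos
  · exact tendsto_fdp_of_lt_pvalue hS hb_tendsto (hzero ▸ ha3 hzero.symm)
      fun t ht ↦ sInf_image_le_of_pos (ha3 hzero.symm) ht
  · have ha_zero : 0 ≤ a 0 / ν.real T := div_nonneg (ha 0 ▸ measureReal_nonneg) hT_pos.le
    have hline : αStar / α ≤ a αStar / ν.real T := hαStar ▸ bhThreshold_div_le hg_cont ha_zero
    have ha_pos : 0 < a αStar :=
      (div_pos_iff_of_pos_right hT_pos).1 ((div_pos hpos hα).trans_le hline)
    have hb_within : Tendsto b l (𝓝[Icc 0 1] αStar) :=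
      tendsto_nhdsWithin_iff.2 ⟨hb_tendsto, .of_forall fun k ↦ hb k ▸ bhThreshold_mem_Icc α _⟩
    rw [← ha]
    exact tendsto_fdp (fun k ↦ Nat.cast_nonneg (S k).card)
      (hG2.tendsto_comp (hU_cont _ hαStar_mem) hb_within)
      (hG1.tendsto_comp (ha_cont _ hαStar_mem) hb_within) ha_pos

/-- under the weighted grid approximation assumptions (G1w), (G2w) and the
regularity assumptions (a1)–(a3), the weighted step-`k` false discovery proportions converge to
the limiting false discovery proportion: `Q_k → Q`. -/
theorem fBH_weighted_fdp_tendsto {d : ℕ}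
    (T : Set (EuclideanSpace ℝ (Fin d)))
    (hT_open : IsOpen T) (hT_bdd : Bornology.IsBounded T) (hT_ne : T.Nonempty)
    (hT_norm : volume T = 1)
    -- weight function and weighted measure ν = f·μ
    (f : EuclideanSpace ℝ (Fin d) → ℝ) (hf_meas : Measurable f)
    (hf_pos : ∀ t ∈ T, 0 < f t) (hf_bdd : ∃ C : ℝ, ∀ t ∈ T, f t ≤ C)
    (ν : Measure (EuclideanSpace ℝ (Fin d)))
    (hν : ν = (volume.restrict T).withDensity (fun x => ENNReal.ofReal (f x)))
    -- p-value function and true-null region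
    (p : EuclideanSpace ℝ (Fin d) → ℝ) (hp_meas : Measurable p)
    (hp_val : ∀ t ∈ T, p t ∈ Set.Icc (0:ℝ) 1)
    (U : Set (EuclideanSpace ℝ (Fin d))) (hU_sub : U ⊆ T) (hU_meas : MeasurableSet U)
    (α : ℝ) (hα : α ∈ Set.Ioo (0:ℝ) 1)
    -- cumulated p-value function and adjusted threshold
    (a : ℝ → ℝ) (ha : ∀ r, a r = (ν {s ∈ T | p s ≤ r}).toReal)
    (αStar : ℝ)
    (hαStar : αStar = sSup {r ∈ Set.Icc (0:ℝ) 1 | r / α ≤ a r / (ν T).toReal})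
    -- nested grids and weighted empirical quantities
    (S : ℕ → Finset (EuclideanSpace ℝ (Fin d)))
    (hS_ne : ∀ k, (S k).Nonempty) (hS_sub : ∀ k, ↑(S k) ⊆ T)
    (hS_mono : ∀ k, S k ⊆ S (k + 1))
    (ak : ℕ → ℝ → ℝ)
    (hak : ∀ k r, ak k r = (∑ s ∈ (S k).filter (fun s => p s ≤ r), f s) / ∑ s ∈ S k, f s)
    (b : ℕ → ℝ) (hb : ∀ k, b k = sSup {r ∈ Set.Icc (0:ℝ) 1 | r / α ≤ ak k r})
    -- (G1w)
    (hG1w : TendstoUniformlyOn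
      (fun k r => (∑ s ∈ (S k).filter (fun s => p s ≤ r), f s) / (S k).card)
      (fun r => (ν {s ∈ T | p s ≤ r}).toReal) atTop (Set.Icc 0 1))
    -- (G2w)
    (hG2w : TendstoUniformlyOn
      (fun k r => (∑ s ∈ (S k).filter (fun s => s ∈ U ∧ p s ≤ r), f s) / (S k).card)
      (fun r => (ν (U ∩ {s | p s ≤ r})).toReal) atTop (Set.Icc 0 1))
    -- (a1)
    (ha1 : ∀ t ∈ Set.Icc (0:ℝ) 1, ν {s ∈ T | p s = t} = 0)
    -- (a2)
    (ha2 : αStar ∈ Set.Ioc 0 α → ∀ O : Set ℝ, IsOpen O → αStar ∈ O →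
      ∃ s₁ ∈ O ∩ Set.Icc (0:ℝ) 1, ∃ s₂ ∈ O ∩ Set.Icc (0:ℝ) 1,
        s₁ / α < a s₁ / (ν T).toReal ∧ a s₂ / (ν T).toReal < s₂ / α)
    -- (a3)
    (ha3 : αStar = 0 → 0 < sInf (p '' T))
    -- weighted step-k false discovery proportions
    (Qk : ℕ → ℝ)
    (hQk : ∀ k, Qk k = if 0 < ∑ t ∈ (S k).filter (fun t => p t ≤ b k), f t
      then (∑ t ∈ (S k).filter (fun t => t ∈ U ∧ p t ≤ b k), f t) /
        ∑ t ∈ (S k).filter (fun t => p t ≤ b k), f t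
      else 0)
    -- limiting false discovery proportion
    (Q : ℝ)
    (hQ : Q = if 0 < ν {t ∈ T | p t ≤ αStar}
      then (ν (U ∩ {t | p t ≤ αStar})).toReal / (ν {t ∈ T | p t ≤ αStar}).toReal
      else 0) :
    Tendsto Qk atTop (nhds Q) := by
  obtain ⟨C, hC⟩ := hf_bdd
  have hνT : ν T ≠ 0 := hν ▸ withDensity_restrict_self_ne_zero hf_meas.ennreal_ofReal
    (hT_norm ▸ one_ne_zero) fun t ht ↦ (ENNReal.ofReal_pos.2 (hf_pos t ht)).ne'
  have hνT_top : ν T ≠ ∞ := hν ▸ withDensity_restrict_ne_top ENNReal.ofReal_ne_top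
    (hT_norm ▸ ENNReal.one_ne_top) (fun t ht ↦ ENNReal.ofReal_le_ofReal (hC t ht)) T
  have hcross (h : αStar ∈ Ioc 0 α) :
      ∃ᶠ r in 𝓝[Icc 0 1] αStar, r / α < a r / ν.real T :=
    (nhdsWithin_basis_open αStar _).frequently_iff.2 fun O hO ↦
      let ⟨r, hr, _, _, hlt, _⟩ := ha2 h O hO.2 hO.1
      ⟨r, hr, hlt⟩
  have hb_eq (k : ℕ) := (hb k).trans (congrArg (bhThreshold α) (funext (hak k)))
  rw [funext hQk, hQ, ← fdp_toReal (measure_ne_top_of_subset (sep_subset T _) hνT_top)]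
  exact fBH_weighted_fdp_tendsto_general hνT hνT_top hp_meas (fun t ht ↦ (hp_val t ht).2) hU_sub
    hα.1 ha hαStar hS_sub hb_eq (hG1w.congr_right fun r _ ↦ (ha r).symm) hG2w ha1 hcross ha3
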